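/- arXiv:1702.08373 — 2 statements merged into one kernel-verified Lean document; each statement's English description precedes it below -/
import Mathlib

section
/- There exists n₀ such that for all n ≥ n₀ the following holds: if d_1,…,d_n are integers with Σ_i d_i even and 1 ≤ d_i ≤ 2√n − 2 for all i ∈ [n], then there exists a simple graph on n vertices with degrees d_1,…,d_n. -/
open Finset

noncomputable section

/-- Simple graphs on vertex set `[n]`, encoded as finsets of non-diagonal unordered pairs. -/
def Graphs (n : ℕ) : Finset (Finset (Sym2 (Fin n))) :=
  Finset.univ.filter (fun E => ∀ e ∈ E, ¬ e.IsDiag)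

/-- Degree of vertex `i` in the graph `E`. -/
def deg {n : ℕ} (E : Finset (Sym2 (Fin n))) (i : Fin n) : ℕ :=
  (E.filter (fun e => i ∈ e)).card

/-- Number of simple graphs on `[n]` with degree sequence `D`. -/
def gcount (n : ℕ) (D : Fin n → ℕ) : ℕ :=
  ((Graphs n).filter (fun E => ∀ i, deg E i = D i)).card

lemma deg_insert' {n : ℕ} (E : Finset (Sym2 (Fin n))) (a b : Fin n) (hab : a ≠ b)
    (h : s(a,b) ∉ E) (i : Fin n) :
    deg (insert s(a,b) E) i = deg E i + (if i = a then 1 else 0) + (if i = b then 1 else 0) := by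
  unfold deg
  rw [Finset.filter_insert]
  by_cases hi : i ∈ s(a,b)
  · rw [if_pos hi, Finset.card_insert_of_notMem (by simp [h])]
    rcases Sym2.mem_iff.1 hi with rfl | rfl
    · simp [hab]
    · simp [hab.symm]
  · rw [if_neg hi]
    rw [Sym2.mem_iff, not_or] at hi
    simp [hi.1, hi.2]

lemma deg_erase' {n : ℕ} (E : Finset (Sym2 (Fin n))) (a b : Fin n) (hab : a ≠ b)
    (h : s(a,b) ∈ E) (i : Fin n) :
    deg E i = deg (E.erase s(a,b)) i + (if i = a then 1 else 0) + (if i = b then 1 else 0) := by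
  rw [← deg_insert' (E.erase s(a,b)) a b hab (by simp) i, Finset.insert_erase h]

def nb {n : ℕ} (E : Finset (Sym2 (Fin n))) (y : Fin n) : Finset (Fin n) :=
  Finset.univ.filter (fun x => s(y,x) ∈ E)

lemma card_nb {n : ℕ} (E : Finset (Sym2 (Fin n))) (y : Fin n) : (nb E y).card = deg E y := by
  unfold deg
  have : E.filter (fun e => y ∈ e) = (nb E y).image (fun x => s(y,x)) := by
    ext e
    simp only [nb, Finset.mem_filter, Finset.mem_image, Finset.mem_univ, true_and]
    constructor
    · rintro ⟨he, hy⟩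
      obtain ⟨z, rfl⟩ := hy
      exact ⟨z, he, rfl⟩
    · rintro ⟨z, hz, rfl⟩
      exact ⟨hz, by simp⟩
  rw [this, Finset.card_image_of_injective]
  intro a b h
  have h : a = b ∨ y = b ∧ a = y := by simpa using h
  rcases h with h | ⟨h1, h2⟩
  · exact h
  · exact h2.trans h1

lemma sum_deg {n : ℕ} (E : Finset (Sym2 (Fin n))) (h : ∀ e ∈ E, ¬ e.IsDiag) :
    ∑ i, deg E i = 2 * E.card := by
  induction E using Finset.induction_on with
  | empty => simp [deg]
  | insert e E he ih =>
    have ih := ih (fun e' h' => h e' (Finset.mem_insert_of_mem h'))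
    have hd := h e (Finset.mem_insert_self _ _)
    induction e with | _ a b =>
    have hab : a ≠ b := by simpa using hd
    simp only [deg_insert' E a b hab he, Finset.sum_add_distrib, ih]
    rw [Finset.card_insert_of_notMem he]
    simp
    omega

def Good {n : ℕ} (D : Fin n → ℕ) (E : Finset (Sym2 (Fin n))) : Prop :=
  (∀ e ∈ E, ¬ e.IsDiag) ∧ ∀ i, deg E i ≤ D i

def Maxi {n : ℕ} (D : Fin n → ℕ) (E : Finset (Sym2 (Fin n))) : Prop :=
  Good D E ∧ ∀ E', Good D E' → E'.card ≤ E.card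

lemma diag_insert {n : ℕ} {E : Finset (Sym2 (Fin n))} {a b : Fin n} (hab : a ≠ b)
    (h : ∀ e ∈ E, ¬ e.IsDiag) : ∀ e ∈ insert s(a,b) E, ¬ e.IsDiag := by
  intro e he
  rcases Finset.mem_insert.1 he with rfl | he
  · simpa using hab
  · exact h e he

lemma diag_erase {n : ℕ} {E : Finset (Sym2 (Fin n))} {f : Sym2 (Fin n)}
    (h : ∀ e ∈ E, ¬ e.IsDiag) : ∀ e ∈ E.erase f, ¬ e.IsDiag :=
  fun e he => h e (Finset.mem_of_mem_erase he)

lemma ne_of_edge {n : ℕ} {E : Finset (Sym2 (Fin n))} {a b : Fin n}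
    (h : ∀ e ∈ E, ¬ e.IsDiag) (hab : s(a,b) ∈ E) : a ≠ b := by
  simpa using h _ hab

/-- adding an edge -/
lemma aug0 {n : ℕ} {D : Fin n → ℕ} {E} (hE : Maxi D E) {u x : Fin n} (hux : u ≠ x)
    (hu : deg E u < D u) (hx : deg E x < D x) : s(u,x) ∈ E := by
  by_contra h
  have := hE.2 (insert s(u,x) E) ⟨diag_insert hux hE.1.1, fun i => by
    rw [deg_insert' E u x hux h]
    have := hE.1.2 i
    by_cases h1 : i = u
    · subst h1; simp [hux]; omega
    · by_cases h2 : i = x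
      · subst h2; simp [h1]; omega
      · simp [h1, h2, this]⟩
  rw [Finset.card_insert_of_notMem h] at this
  omega

lemma aug1 {n : ℕ} {D : Fin n → ℕ} {E} (hE : Maxi D E) {u w x x' : Fin n}
    (H : ∀ i, deg E i + (if i = u then 1 else 0) + (if i = w then 1 else 0) ≤ D i)
    (hux : u ≠ x) (hwx : w ≠ x) (hux' : u ≠ x') (hwx' : w ≠ x')
    (h1 : s(u,x) ∉ E) (h2 : s(w,x') ∉ E) : s(x,x') ∉ E := by
  intro h
  have hxx := ne_of_edge hE.1.1 h
  have d0 := deg_erase' E x x' hxx h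
  have c0 := Finset.card_erase_add_one h
  have m1 : s(u,x) ∉ E.erase s(x,x') := by simp [h1]
  have d1 := deg_insert' _ u x hux m1
  have c1 := Finset.card_insert_of_notMem m1
  have m2 : s(w,x') ∉ insert s(u,x) (E.erase s(x,x')) := by
    simp [h2, hwx, hux'.symm, hxx.symm]
  have d2 := deg_insert' _ w x' hwx' m2
  have c2 := Finset.card_insert_of_notMem m2
  have := hE.2 _ ⟨diag_insert hwx' (diag_insert hux (diag_erase hE.1.1)), fun i => by
    have := H i
    have := d0 i
    rw [d2, d1]
    omega⟩
  omega

lemma aug2 {n : ℕ} {D : Fin n → ℕ} {E} (hE : Maxi D E) {u w x x' y z : Fin n}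
    (H : ∀ i, deg E i + (if i = u then 1 else 0) + (if i = w then 1 else 0) ≤ D i)
    (hux : u ≠ x) (hwx : w ≠ x) (hux' : u ≠ x') (hwx' : w ≠ x')
    (hxx : x ≠ x') (hyz : y ≠ z)
    (huy : u ≠ y) (huz : u ≠ z) (hwy : w ≠ y) (hwz : w ≠ z)
    (hxy' : x' ≠ y)
    (h1 : s(u,x) ∉ E) (h2 : s(w,x') ∉ E) (h3 : s(x,y) ∈ E) (h4 : s(x',z) ∈ E) :
    s(y,z) ∈ E := by
  by_contra h
  have hxy := ne_of_edge hE.1.1 h3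
  have hxz' := ne_of_edge hE.1.1 h4
  have d0 := deg_erase' E x y hxy h3
  have c0 := Finset.card_erase_add_one h3
  have m3 : s(x',z) ∈ E.erase s(x,y) := by
    simp [h4, hxx.symm, hxy']
  have d3 := deg_erase' _ x' z hxz' m3
  have c3 := Finset.card_erase_add_one m3
  have m1 : s(u,x) ∉ (E.erase s(x,y)).erase s(x',z) := by simp [h1]
  have d1 := deg_insert' _ u x hux m1
  have c1 := Finset.card_insert_of_notMem m1
  have m2 : s(w,x') ∉ insert s(u,x) ((E.erase s(x,y)).erase s(x',z)) := by
    simp [h2, hwx, hux'.symm, hxx.symm]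
  have d2 := deg_insert' _ w x' hwx' m2
  have c2 := Finset.card_insert_of_notMem m2
  have m4 : s(y,z) ∉ insert s(w,x') (insert s(u,x) ((E.erase s(x,y)).erase s(x',z))) := by
    simp [h, hwy.symm, hwz.symm, huy.symm, huz.symm]
  have d4 := deg_insert' _ y z hyz m4
  have c4 := Finset.card_insert_of_notMem m4
  have := hE.2 _ ⟨diag_insert hyz (diag_insert hwx' (diag_insert hux (diag_erase
      (diag_erase hE.1.1)))), fun i => by
    have := H i
    have := d0 i
    have := d3 i
    rw [d4, d2, d1]
    omega⟩
  omega

lemma core {n : ℕ} {D : Fin n → ℕ} {E} (hE : Maxi D E) {u w : Fin n} (Δ : ℕ)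
    (hD : ∀ i, 1 ≤ D i ∧ D i ≤ Δ) (hn : (Δ + 2)^2 ≤ 4 * n)
    (H : ∀ i, deg E i + (if i = u then 1 else 0) + (if i = w then 1 else 0) ≤ D i)
    (hN : ∀ x, (s(u,x) ∈ E ∨ x = u) ↔ (s(w,x) ∈ E ∨ x = w)) : False := by
  classical
  set C := insert u (nb E u) with hC
  have memC : ∀ x, x ∈ C ↔ (s(u,x) ∈ E ∨ x = u) := by
    intro x; simp [hC, nb, or_comm]
  have hu := H u
  simp only [if_true] at hu
  have hnotI : ∀ x, x ∉ C → u ≠ x ∧ w ≠ x ∧ s(u,x) ∉ E ∧ s(w,x) ∉ E := by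
    intro x hx
    have h1 := (memC x).not.1 hx
    have h2 := (hN x).not.1 h1
    push Not at h1 h2
    exact ⟨h1.2.symm, h2.2.symm, h1.1, h2.1⟩
  have cardC : C.card ≤ Δ := by
    have h1 : C.card ≤ (nb E u).card + 1 := Finset.card_insert_le u (nb E u)
    rw [card_nb] at h1
    have := (hD u).2
    omega
  set I := Cᶜ with hI
  have memI : ∀ x, x ∈ I ↔ x ∉ C := by intro x; simp [hI]
  have cardI : C.card + I.card = n := by
    rw [hI, Finset.card_add_card_compl]; simp
  have indep : ∀ x ∉ C, ∀ x' ∉ C, s(x,x') ∉ E := by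
    intro x hx x' hx'
    obtain ⟨a1, a2, a3, a4⟩ := hnotI x hx
    obtain ⟨b1, b2, b3, b4⟩ := hnotI x' hx'
    exact aug1 hE H a1 a2 b1 b2 a3 b4
  set P := C.filter (fun y => (nb E y ∩ I).Nonempty) with hP
  have hPmem : ∀ y ∈ P, y ∈ C ∧ u ≠ y ∧ w ≠ y ∧ s(u,y) ∈ E := by
    intro y hy
    obtain ⟨hyC, x, hx⟩ := Finset.mem_filter.1 hy
    simp only [Finset.mem_inter, nb, Finset.mem_filter, Finset.mem_univ, true_and, memI] at hx
    obtain ⟨a1, a2, a3, a4⟩ := hnotI x hx.2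
    have h1 : u ≠ y := by rintro rfl; exact a3 hx.1
    have h2 : w ≠ y := by rintro rfl; exact a4 hx.1
    refine ⟨hyC, h1, h2, ?_⟩
    rcases (memC y).1 hyC with h | h
    · exact h
    · exact absurd h.symm h1
  have cover : I ⊆ P.biUnion (fun y => nb E y ∩ I) := by
    intro x hx
    have hxC := (memI x).1 hx
    obtain ⟨a1, a2, a3, a4⟩ := hnotI x hxC
    have hpos : 0 < deg E x := by
      by_contra h0
      refine a3 (aug0 hE a1 (by omega) ?_)
      have := (hD x).1
      omega
    rw [← card_nb, Finset.card_pos] at hpos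
    obtain ⟨y, hy⟩ := hpos
    have hxy : s(x,y) ∈ E := by simpa [nb] using hy
    have hyx : s(y,x) ∈ E := by rwa [Sym2.eq_swap]
    have hyC : y ∈ C := by
      by_contra hyC
      exact indep x hxC y hyC hxy
    have hm : x ∈ nb E y ∩ I := by simp [nb, hyx, hx]
    exact Finset.mem_biUnion.2 ⟨y, Finset.mem_filter.2 ⟨hyC, ⟨x, hm⟩⟩, hm⟩
  have bound : ∀ y ∈ P, (nb E y ∩ I).card + P.card ≤ Δ := by
    intro y hy
    obtain ⟨y1, y2, y3, y4⟩ := hPmem y hy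
    by_cases h2 : 2 ≤ (nb E y ∩ I).card
    · have cl : ∀ z ∈ P, z ≠ y → s(y,z) ∈ E := by
        intro z hz hzy
        obtain ⟨z1, z2, z3, z4⟩ := hPmem z hz
        obtain ⟨_, x', hx'⟩ := Finset.mem_filter.1 hz
        obtain ⟨x, hx, hxx⟩ := Finset.exists_mem_ne (Nat.lt_of_succ_le h2) x'
        simp only [Finset.mem_inter, nb, Finset.mem_filter, Finset.mem_univ, true_and, memI]
          at hx hx'
        obtain ⟨a1, a2, a3, a4⟩ := hnotI x hx.2
        obtain ⟨b1, b2, b3, b4⟩ := hnotI x' hx'.2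
        refine aug2 hE H a1 a2 b1 b2 hxx hzy.symm y2 z2 y3 z3 ?_ a3 b4 ?_ ?_
        · rintro rfl; exact hx'.2 y1
        · rw [Sym2.eq_swap]; exact hx.1
        · rw [Sym2.eq_swap]; exact hx'.1
      have sub : (nb E y ∩ I) ∪ insert u (P.erase y) ⊆ nb E y := by
        intro z hz
        rcases Finset.mem_union.1 hz with h | h
        · exact Finset.mem_of_mem_inter_left h
        · simp only [nb, Finset.mem_filter, Finset.mem_univ, true_and]
          rcases Finset.mem_insert.1 h with rfl | h
          · rwa [Sym2.eq_swap]
          · exact cl z (Finset.mem_of_mem_erase h) (Finset.ne_of_mem_erase h)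
      have dis : Disjoint (nb E y ∩ I) (insert u (P.erase y)) := by
        rw [Finset.disjoint_left]
        intro z hz hz'
        have hzC := (memI z).1 (Finset.mem_of_mem_inter_right hz)
        rcases Finset.mem_insert.1 hz' with rfl | h
        · exact hzC ((memC _).2 (Or.inr rfl))
        · exact hzC (hPmem z (Finset.mem_of_mem_erase h)).1
      have c := Finset.card_le_card sub
      rw [Finset.card_union_of_disjoint dis, card_nb, Finset.card_insert_of_notMem,
        Finset.card_erase_of_mem hy] at c
      · have := Finset.card_pos.2 ⟨y, hy⟩
        have := hE.1.2 y
        have := (hD y).2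
        omega
      · intro h
        exact (hPmem u (Finset.mem_of_mem_erase h)).2.1 rfl
    · have hlt : P.card < C.card := by
        apply Finset.card_lt_card
        refine ⟨Finset.filter_subset _ _, fun h => ?_⟩
        exact (hPmem u (h ((memC u).2 (Or.inr rfl)))).2.1 rfl
      omega
  have cI : I.card ≤ P.card * (Δ - P.card) := by
    calc I.card ≤ _ := Finset.card_le_card cover
      _ ≤ _ := Finset.card_biUnion_le
      _ ≤ ∑ y ∈ P, (Δ - P.card) := Finset.sum_le_sum (fun y hy => by
          have := bound y hy; omega)
      _ = _ := by simp
  have hPΔ : P.card ≤ Δ := (Finset.card_le_card (Finset.filter_subset _ _)).trans cardC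
  obtain ⟨q, hq⟩ := Nat.exists_eq_add_of_le hPΔ
  have : Δ - P.card = q := by omega
  rw [this] at cI
  have h3 : 4 * (P.card * q) ≤ Δ^2 := by
    rw [hq]
    zify
    nlinarith [sq_nonneg ((P.card : ℤ) - q)]
  nlinarith

lemma transfer {n : ℕ} {D : Fin n → ℕ} {E} (hE : Maxi D E) {u w x : Fin n}
    (H : ∀ i, deg E i + (if i = u then 1 else 0) + (if i = w then 1 else 0) ≤ D i)
    (hux : u ≠ x) (h1 : s(u,x) ∉ E) (h2 : s(w,x) ∈ E) :
    ∃ E', Maxi D E' ∧ 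
    ∀ i, deg E' i + (if i = w then 1 else 0) + (if i = w then 1 else 0) ≤ D i := by
  have hwx := ne_of_edge hE.1.1 h2
  have d0 := deg_erase' E w x hwx h2
  have c0 := Finset.card_erase_add_one h2
  have m1 : s(u,x) ∉ E.erase s(w,x) := by simp [h1]
  have d1 := deg_insert' _ u x hux m1
  have c1 := Finset.card_insert_of_notMem m1
  have key : ∀ i, deg (insert s(u,x) (E.erase s(w,x))) i + (if i = w then 1 else 0)
      + (if i = w then 1 else 0) ≤ D i := by
    intro i
    have := H i
    have := d0 i
    rw [d1]
    omega
  refine ⟨_, ⟨⟨diag_insert hux (diag_erase hE.1.1), fun i => ?_⟩, fun E' hE' => ?_⟩, key⟩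
  · have := key i
    omega
  · have := hE.2 E' hE'
    omega

lemma graphical {n : ℕ} {D : Fin n → ℕ} (Δ : ℕ)
    (hD : ∀ i, 1 ≤ D i ∧ D i ≤ Δ) (hn : (Δ + 2)^2 ≤ 4 * n) (hev : Even (∑ i, D i)) :
    ∃ E : Finset (Sym2 (Fin n)), (∀ e ∈ E, ¬ e.IsDiag) ∧ ∀ i, deg E i = D i := by
  classical
  obtain ⟨E, hEm, hmax⟩ := Finset.exists_max_image
    (Finset.univ.filter (fun E : Finset (Sym2 (Fin n)) => Good D E)) Finset.card
    ⟨∅, Finset.mem_filter.2 ⟨Finset.mem_univ _, by simp, by simp [deg]⟩⟩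
  have hE : Maxi D E := ⟨(Finset.mem_filter.1 hEm).2, fun E' h => hmax E' (by simp [h])⟩
  refine ⟨E, hE.1.1, ?_⟩
  by_contra hne
  push Not at hne
  obtain ⟨u, hu⟩ := hne
  have hu : deg E u < D u := lt_of_le_of_ne (hE.1.2 u) hu
  have same : ∀ (E : Finset (Sym2 (Fin n))) (w : Fin n), Maxi D E →
      (∀ i, deg E i + (if i = w then 1 else 0) + (if i = w then 1 else 0) ≤ D i) → False :=
    fun E w hE H => core hE Δ hD hn H (fun x => Iff.rfl)
  by_cases h2 : deg E u + 2 ≤ D u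
  · refine same E u hE (fun i => ?_)
    have := hE.1.2 i
    by_cases hi : i = u
    · subst hi; simp; omega
    · simp [hi, this]
  by_cases h3 : ∃ w, w ≠ u ∧ deg E w < D w
  · obtain ⟨w, hwu, hw⟩ := h3
    have H : ∀ i, deg E i + (if i = u then 1 else 0) + (if i = w then 1 else 0) ≤ D i := by
      intro i
      have := hE.1.2 i
      by_cases hi : i = u
      · subst hi; simp [hwu.symm]; omega
      · by_cases hi' : i = w
        · subst hi'; simp [hwu]; omega
        · simp [hi, hi', this]
    have H' : ∀ i, deg E i + (if i = w then 1 else 0) + (if i = u then 1 else 0) ≤ D i := by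
      intro i
      have := H i
      omega
    have huw := aug0 hE hwu.symm hu hw
    have hwu' := aug0 hE hwu hw hu
    refine core hE Δ hD hn H (fun x => ?_)
    constructor
    · rintro (h | rfl)
      · by_contra hc
        push Not at hc
        obtain ⟨E', hE', hh⟩ := transfer hE H' hc.2.symm hc.1 h
        exact same E' _ hE' hh
      · exact Or.inl hwu'
    · rintro (h | rfl)
      · by_contra hc
        push Not at hc
        obtain ⟨E', hE', hh⟩ := transfer hE H hc.2.symm hc.1 h
        exact same E' _ hE' hh
      · exact Or.inl huw
  · push Not at h3
    have : ∀ i, D i = deg E i + (if i = u then 1 else 0) := by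
      intro i
      have := hE.1.2 i
      by_cases hi : i = u
      · subst hi; simp; omega
      · have := h3 i hi
        simp [hi]; omega
    simp only [this, Finset.sum_add_distrib, sum_deg E hE.1.1] at hev
    simp at hev

/-- Sequences with entries between 1 and 2√n - 2 are graphical (Lemma 2.4(b)). -/
theorem small_degree_graphical :
    ∃ n₀ : ℕ, ∀ n : ℕ, n₀ ≤ n →
      ∀ D : Fin n → ℕ, Even (∑ i, D i) →
        (∀ i, 1 ≤ D i ∧ (D i : ℝ) ≤ 2 * Real.sqrt n - 2) →
        0 < gcount n D := by
  refine ⟨1, fun n hn D hev hD => ?_⟩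
  have hpos : 0 < n := hn
  have hD' : ∀ i, 1 ≤ D i ∧ D i ≤ Finset.univ.sup D :=
    fun i => ⟨(hD i).1, Finset.le_sup (Finset.mem_univ i)⟩
  obtain ⟨j, _, hj⟩ := Finset.exists_mem_eq_sup (Finset.univ : Finset (Fin n))
    ⟨⟨0, hpos⟩, Finset.mem_univ _⟩ D
  have hb : (Finset.univ.sup D + 2)^2 ≤ 4 * n := by
    rw [hj]
    have h1 := (hD j).2
    have h2 := Real.sq_sqrt (Nat.cast_nonneg (α := ℝ) n)
    have h3 : ((D j : ℝ) + 2)^2 ≤ 4 * n := by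
      have h0 : (0:ℝ) ≤ D j := Nat.cast_nonneg _
      nlinarith [Real.sqrt_nonneg (n:ℝ)]
    exact_mod_cast h3
  obtain ⟨E, h1, h2⟩ := graphical _ hD' hb hev
  unfold gcount
  rw [Finset.card_pos]
  exact ⟨E, by simpa [Graphs] using ⟨h1, h2⟩⟩
end
end

section
/- Let n be an integer, A ⊆ C([n],2), d a sequence of nonnegative integers of length n, and a, b ∈ [n]. Suppose both d − e_a and d − e_b are A-realisable, and suppose B(b, a, d − e_a) ≠ 1. Then R_{ab}(d) = (d_a / d_b) · (1 − B(a, b, d − e_b)) / (1 − B(b, a, d − e_a)), where for distinct i, j ∈ [n] and a sequence d' with N(d') > 0, B(i, j, d') = (1/d_i) · ( Σ_{v ∈ A(i)\A(j)} P_{iv}(d') + Σ_{v ∈ A(i)∩A(j)} P_{ivj}(d') ). -/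
open Finset

noncomputable section

/-- `N(D)`: the number of graphs realising the (integer) degree sequence `D` over the set `A`
of allowable pairs. -/
def NA (n : ℕ) (A : Finset (Sym2 (Fin n))) (D : Fin n → ℤ) : ℕ :=
  ((Graphs n).filter (fun E => E ⊆ A ∧ ∀ i, (deg E i : ℤ) = D i)).card

/-- `N_F(D)`: the number of graphs realising `D` over `A` that contain all edges of `F`. -/
def NAE (n : ℕ) (A : Finset (Sym2 (Fin n))) (F : Finset (Sym2 (Fin n))) (D : Fin n → ℤ) : ℕ :=
  ((Graphs n).filter (fun E => E ⊆ A ∧ F ⊆ E ∧ ∀ i, (deg E i : ℤ) = D i)).card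

/-- `P_F(D) = N_F(D)/N(D)`: the probability that a uniformly random graph realising `D`
over `A` contains all edges of `F`. -/
def PA (n : ℕ) (A : Finset (Sym2 (Fin n))) (F : Finset (Sym2 (Fin n))) (D : Fin n → ℤ) : ℝ :=
  (NAE n A F D : ℝ) / (NA n A D : ℝ)

/-- The `a`-th standard unit vector. -/
def eV {n : ℕ} (a : Fin n) : Fin n → ℤ := fun i => if i = a then 1 else 0

/-- `A(v)`: the allowable neighbourhood of `v`. -/
def nbhd (n : ℕ) (A : Finset (Sym2 (Fin n))) (v : Fin n) : Finset (Fin n) :=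
  Finset.univ.filter (fun u => s(v, u) ∈ A)

/-- `R_{ab}(D) = N(D - e_a)/N(D - e_b)`. -/
def RA (n : ℕ) (A : Finset (Sym2 (Fin n))) (a b : Fin n) (D : Fin n → ℤ) : ℝ :=
  (NA n A (D - eV a) : ℝ) / (NA n A (D - eV b) : ℝ)

/-- `B(i, j, D)` from Proposition 3.1(b). -/
def Bfun (n : ℕ) (A : Finset (Sym2 (Fin n))) (i j : Fin n) (D : Fin n → ℤ) : ℝ :=
  (1 / (D i : ℝ)) *
    ((∑ v ∈ nbhd n A i \ nbhd n A j, PA n A {s(i, v)} D) +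
      ∑ v ∈ nbhd n A i ∩ nbhd n A j, PA n A {s(i, v), s(j, v)} D)

def RG (n : ℕ) (A : Finset (Sym2 (Fin n))) (D : Fin n → ℤ) : Finset (Finset (Sym2 (Fin n))) :=
  (Graphs n).filter (fun E => E ⊆ A ∧ ∀ i, (deg E i : ℤ) = D i)

def TT (n : ℕ) (A : Finset (Sym2 (Fin n))) (D : Fin n → ℤ) (i j v : Fin n) : ℕ :=
  ((RG n A D).filter (fun E => s(i, v) ∈ E ∧ s(j, v) ∉ E)).card

lemma mem_RG {n : ℕ} {A : Finset (Sym2 (Fin n))} (hA : ∀ e ∈ A, ¬ e.IsDiag) {D : Fin n → ℤ}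
    {E : Finset (Sym2 (Fin n))} : E ∈ RG n A D ↔ E ⊆ A ∧ ∀ i, (deg E i : ℤ) = D i := by
  simp only [RG, Graphs, mem_filter, mem_univ, true_and, and_iff_right_iff_imp]
  intro h e he
  exact hA e (h.1 he)

lemma NAE_eq {n : ℕ} (A F : Finset (Sym2 (Fin n))) (D : Fin n → ℤ) :
    NAE n A F D = ((RG n A D).filter (fun E => F ⊆ E)).card := by
  unfold NAE RG
  rw [filter_filter]
  congr 1
  ext E
  simp only [mem_filter]
  tauto

lemma deg_swap {n : ℕ} {E : Finset (Sym2 (Fin n))} {e f : Sym2 (Fin n)} (he : e ∈ E) (hf : f ∉ E)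
    (i : Fin n) : deg (insert f (E.erase e)) i + (if i ∈ e then 1 else 0)
      = deg E i + (if i ∈ f then 1 else 0) := by
  have hf' : f ∉ E.erase e := fun h => hf (mem_of_mem_erase h)
  simp only [deg, card_filter]
  rw [sum_insert hf', add_assoc, sum_erase_add _ _ he, add_comm]

lemma swap_mem {n : ℕ} {A : Finset (Sym2 (Fin n))} (hA : ∀ e ∈ A, ¬ e.IsDiag) {D : Fin n → ℤ}
    {a b v : Fin n} (hav : s(a, v) ∈ A) (hbv : s(b, v) ∈ A) {E : Finset (Sym2 (Fin n))}
    (hE : E ∈ RG n A (D - eV a)) (h1 : s(b, v) ∈ E) (h2 : s(a, v) ∉ E) :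
    insert s(a, v) (E.erase s(b, v)) ∈ RG n A (D - eV b) := by
  rw [mem_RG hA] at *
  refine ⟨?_, fun i => ?_⟩
  · intro x hx
    rcases mem_insert.1 hx with rfl | hx
    · exact hav
    · exact hE.1 (mem_of_mem_erase hx)
  · have h := deg_swap h1 h2 i
    have h3 := hE.2 i
    have ha := hA _ hav
    have hb := hA _ hbv
    simp only [Sym2.mk_isDiag_iff] at ha hb
    simp only [Pi.sub_apply, eV, Sym2.mem_iff] at *
    zify at h
    by_cases hia : i = a <;> by_cases hib : i = b <;> by_cases hiv : i = v <;>
      simp_all <;> lia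

lemma TT_swap {n : ℕ} {A : Finset (Sym2 (Fin n))} (hA : ∀ e ∈ A, ¬ e.IsDiag) {D : Fin n → ℤ}
    {a b v : Fin n} (hab : a ≠ b) (hav : s(a, v) ∈ A) (hbv : s(b, v) ∈ A) :
    TT n A (D - eV a) b a v = TT n A (D - eV b) a b v := by
  have hne : s(a, v) ≠ s(b, v) := by
    intro h
    exact hab (Sym2.congr_left.1 h)
  unfold TT
  refine card_nbij' (fun E => insert s(a, v) (E.erase s(b, v)))
    (fun E => insert s(b, v) (E.erase s(a, v))) ?_ ?_ ?_ ?_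
  · intro E hE
    simp only [coe_filter, Set.mem_setOf_eq] at *
    refine ⟨swap_mem hA hav hbv hE.1 hE.2.1 hE.2.2, by simp, by simp [hne.symm]⟩
  · intro E hE
    simp only [coe_filter, Set.mem_setOf_eq] at *
    refine ⟨swap_mem hA hbv hav hE.1 hE.2.1 hE.2.2, by simp, by simp [hne]⟩
  · intro E hE
    simp only [coe_filter, Set.mem_setOf_eq] at *
    have h1 : s(a, v) ∉ E.erase s(b, v) := fun h => hE.2.2 (mem_of_mem_erase h)
    simp only [erase_insert h1, insert_erase hE.2.1]
  · intro E hE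
    simp only [coe_filter, Set.mem_setOf_eq] at *
    have h1 : s(b, v) ∉ E.erase s(a, v) := fun h => hE.2.2 (mem_of_mem_erase h)
    simp only [erase_insert h1, insert_erase hE.2.1]

lemma deg_eq {n : ℕ} {A E : Finset (Sym2 (Fin n))} (hE : E ⊆ A) (i : Fin n) :
    deg E i = ((nbhd n A i).filter (fun v => s(i, v) ∈ E)).card := by
  unfold deg
  symm
  refine card_nbij (fun v => s(i, v)) ?_ ?_ ?_
  · intro v hv
    simp at hv ⊢
    exact hv.2
  · intro v _ w _ h
    exact Sym2.congr_right.1 h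
  · intro e he
    simp only [coe_filter, Set.mem_setOf_eq] at he
    obtain ⟨h1, w, rfl⟩ := he
    exact ⟨w, by simp [nbhd, h1, hE h1], rfl⟩

lemma sum_NAE {n : ℕ} {A : Finset (Sym2 (Fin n))} (hA : ∀ e ∈ A, ¬ e.IsDiag) (D : Fin n → ℤ)
    (i : Fin n) : ∑ v ∈ nbhd n A i, (NAE n A {s(i, v)} D : ℝ) = NA n A D * D i := by
  have h : ∀ E ∈ RG n A D, ∑ v ∈ nbhd n A i, (if s(i, v) ∈ E then (1:ℝ) else 0) = D i := by
    intro E hE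
    rw [mem_RG hA] at hE
    rw [← hE.2 i, deg_eq hE.1 i]
    simp
  have h2 := sum_congr rfl h
  rw [sum_comm] at h2
  simp only [sum_const, nsmul_eq_mul] at h2
  rw [show NA n A D = (RG n A D).card from rfl, ← h2]
  refine sum_congr rfl fun v _ => ?_
  rw [NAE_eq]
  simp

lemma NAE_split {n : ℕ} (A : Finset (Sym2 (Fin n))) (D : Fin n → ℤ) (i j v : Fin n) :
    NAE n A {s(i, v)} D = NAE n A {s(i, v), s(j, v)} D + TT n A D i j v := by
  rw [NAE_eq, NAE_eq, TT, ← card_filter_add_card_filter_not (fun E => s(j, v) ∈ E),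
    filter_filter, filter_filter]
  simp [insert_subset_iff]

lemma key {n : ℕ} {A : Finset (Sym2 (Fin n))} (hA : ∀ e ∈ A, ¬ e.IsDiag) (D : Fin n → ℤ)
    (i j : Fin n) (hN : 0 < NA n A D) (hi : D i ≠ 0) :
    (NA n A D : ℝ) * D i * (1 - Bfun n A i j D) =
      ∑ v ∈ nbhd n A i ∩ nbhd n A j, (TT n A D i j v : ℝ) := by
  have hN' : (NA n A D : ℝ) ≠ 0 := by exact_mod_cast hN.ne'
  have hi' : (D i : ℝ) ≠ 0 := by exact_mod_cast hi
  have h := sum_NAE hA D i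
  rw [← sum_inter_add_sum_sdiff (nbhd n A i) (nbhd n A j)] at h
  have h2 : ∀ v ∈ nbhd n A i ∩ nbhd n A j, (NAE n A {s(i, v)} D : ℝ) =
      NAE n A {s(i, v), s(j, v)} D + TT n A D i j v := fun v _ => by
    exact_mod_cast NAE_split A D i j v
  rw [sum_congr rfl h2, sum_add_distrib] at h
  unfold Bfun PA
  rw [← sum_div, ← sum_div]
  field_simp
  linarith

/-- Recursive formula for the ratio `R_{ab}` (Proposition 3.1(b)). -/
theorem ratio_recursion (n : ℕ) (A : Finset (Sym2 (Fin n)))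
    (hA : ∀ e ∈ A, ¬ e.IsDiag) (D : Fin n → ℤ) (hD : ∀ i, 0 ≤ D i)
    (a b : Fin n)
    (ha : 0 < NA n A (D - eV a)) (hb : 0 < NA n A (D - eV b))
    (hB : Bfun n A b a (D - eV a) ≠ 1) :
    RA n A a b D =
      ((D a : ℝ) / (D b : ℝ)) *
        ((1 - Bfun n A a b (D - eV b)) / (1 - Bfun n A b a (D - eV a))) := by
  have hpos : ∀ c, 0 < NA n A (D - eV c) → 0 < D c := by
    intro c hc
    obtain ⟨E, hE⟩ := card_pos.1 hc
    have h := (mem_filter.1 hE).2.2 c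
    simp [eV] at h
    omega
  have hDa := hpos a ha
  have hDb := hpos b hb
  have hDa' : (D a : ℝ) ≠ 0 := by exact_mod_cast hDa.ne'
  have hDb' : (D b : ℝ) ≠ 0 := by exact_mod_cast hDb.ne'
  have ha' : (NA n A (D - eV a) : ℝ) ≠ 0 := by exact_mod_cast ha.ne'
  have hb' : (NA n A (D - eV b) : ℝ) ≠ 0 := by exact_mod_cast hb.ne'
  have hB' : 1 - Bfun n A b a (D - eV a) ≠ 0 := fun h => hB (by linarith)
  by_cases hab : a = b
  · subst hab
    rw [RA, div_self ha', div_self hDa', div_self hB', one_mul]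
  · have e1 : (D - eV a) b = D b := by simp [eV, Ne.symm hab]
    have e2 : (D - eV b) a = D a := by simp [eV, hab]
    have k1 := key hA (D - eV a) b a ha (by rw [e1]; exact hDb.ne')
    have k2 := key hA (D - eV b) a b hb (by rw [e2]; exact hDa.ne')
    rw [e1] at k1
    rw [e2] at k2
    have k3 : ∑ v ∈ nbhd n A b ∩ nbhd n A a, (TT n A (D - eV a) b a v : ℝ) =
        ∑ v ∈ nbhd n A a ∩ nbhd n A b, (TT n A (D - eV b) a b v : ℝ) := by
      rw [inter_comm]
      refine sum_congr rfl fun v hv => ?_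
      simp only [nbhd, mem_inter, mem_filter, mem_univ, true_and] at hv
      rw [TT_swap hA hab hv.1 hv.2]
    rw [← k1, ← k2] at k3
    rw [RA, div_mul_div_comm, div_eq_div_iff hb' (mul_ne_zero hDb' hB')]
    linarith
end
end
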